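/- The matrix coefficient functionals ᵐc^i_j : A_t → ℂ, defined by ᵐc^i_j(Z) = (ρ_m(Z))_{ij}, taken over all integers m ≥ 0 and all 0 ≤ i, j ≤ m, are linearly independent in the dual vector space of A_t (hence form a basis of their linear span, the subalgebra qSL₂ of matrix coefficients). -/

import Mathlib

open scoped TensorProduct
open Complex

noncomputable section

/-- The four generators `X`, `Y`, `K`, `K⁻¹` of the algebra `Aₜ`. -/
inductive QGen : Type
  | X | Y | K | K'
  deriving DecidableEq

/-- The image of a generator in the free algebra on the generators. -/
def qg (x : QGen) : FreeAlgebra ℂ QGen := FreeAlgebra.ι ℂ x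

/-- The defining relations of `Aₜ`:
`KX = t²XK`, `KY = t⁻²YK`, `XY − YX = (K² − K⁻²)/(t² − t⁻²)`, `KK⁻¹ = K⁻¹K = 1`. -/
inductive QRel (t : ℂ) : FreeAlgebra ℂ QGen → FreeAlgebra ℂ QGen → Prop
  | KX : QRel t (qg .K * qg .X) ((t ^ 2 : ℂ) • (qg .X * qg .K))
  | KY : QRel t (qg .K * qg .Y) ((t⁻¹ ^ 2 : ℂ) • (qg .Y * qg .K))
  | XY : QRel t (qg .X * qg .Y - qg .Y * qg .X)
      (((t ^ 2 - t⁻¹ ^ 2)⁻¹ : ℂ) • (qg .K * qg .K - qg .K' * qg .K'))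
  | KK' : QRel t (qg .K * qg .K') 1
  | K'K : QRel t (qg .K' * qg .K) 1

/-- The algebra `Aₜ`: the quotient of the free algebra by the defining relations. -/
abbrev At (t : ℂ) : Type := RingQuot (QRel t)

/-- The generator `X` in `Aₜ`. -/
def aX (t : ℂ) : At t := RingQuot.mkAlgHom ℂ (QRel t) (qg .X)
/-- The generator `Y` in `Aₜ`. -/
def aY (t : ℂ) : At t := RingQuot.mkAlgHom ℂ (QRel t) (qg .Y)
/-- The generator `K` in `Aₜ`. -/
def aK (t : ℂ) : At t := RingQuot.mkAlgHom ℂ (QRel t) (qg .K)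
/-- The generator `K⁻¹` in `Aₜ`. -/
def aK' (t : ℂ) : At t := RingQuot.mkAlgHom ℂ (QRel t) (qg .K')

/-- The quantum integer `[n] = (t^{2n} − t^{−2n})/(t² − t⁻²)`. -/
def qint (t : ℂ) (n : ℤ) : ℂ := (t ^ (2 * n) - t ^ (-(2 * n))) / (t ^ 2 - t⁻¹ ^ 2)

/-- The matrix of `ρ_m(K)`: `K e_j = t^{m−2j} e_j`. -/
def Kmat (t : ℂ) (m : ℕ) : Matrix (Fin (m + 1)) (Fin (m + 1)) ℂ :=
  Matrix.diagonal fun j => t ^ ((m : ℤ) - 2 * (j : ℤ))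

/-- The matrix of `ρ_m(K⁻¹)`: `K⁻¹ e_j = t^{−(m−2j)} e_j`. -/
def K'mat (t : ℂ) (m : ℕ) : Matrix (Fin (m + 1)) (Fin (m + 1)) ℂ :=
  Matrix.diagonal fun j => t ^ (-((m : ℤ) - 2 * (j : ℤ)))

/-- The matrix of `ρ_m(X)`: `X e_j = [j] e_{j−1}` (with `e_{−1} = 0`). -/
def Xmat (t : ℂ) (m : ℕ) : Matrix (Fin (m + 1)) (Fin (m + 1)) ℂ :=
  Matrix.of fun i j => if (j : ℕ) = (i : ℕ) + 1 then qint t (j : ℤ) else 0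

/-- The matrix of `ρ_m(Y)`: `Y e_j = [m−j] e_{j+1}` (with `e_{m+1} = 0`). -/
def Ymat (t : ℂ) (m : ℕ) : Matrix (Fin (m + 1)) (Fin (m + 1)) ℂ :=
  Matrix.of fun i j => if (i : ℕ) = (j : ℕ) + 1 then qint t ((m : ℤ) - (j : ℤ)) else 0

/-- `ρ` is the representation `ρ_m : Aₜ → M_{m+1}(ℂ)` determined by the matrices above. -/
def IsRho (t : ℂ) (m : ℕ) (ρ : At t →ₐ[ℂ] Matrix (Fin (m + 1)) (Fin (m + 1)) ℂ) : Prop :=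
  ρ (aX t) = Xmat t m ∧ ρ (aY t) = Ymat t m ∧ ρ (aK t) = Kmat t m ∧ ρ (aK' t) = K'mat t m

/-- The matrix coefficient functional `ᵐc^i_j : Aₜ → ℂ`, `Z ↦ (ρ_m(Z))_{ij}`. -/
def coeffFn (t : ℂ) (ρ : ∀ m : ℕ, At t →ₐ[ℂ] Matrix (Fin (m + 1)) (Fin (m + 1)) ℂ)
    (p : Σ m : ℕ, Fin (m + 1) × Fin (m + 1)) : Module.Dual ℂ (At t) where
  toFun Z := ρ p.1 Z p.2.1 p.2.2
  map_add' a b := by simp [Matrix.add_apply]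
  map_smul' c a := by simp [Matrix.smul_apply]

/-! The element `Y ^ i * P(K) * X ^ j` of `Aₜ`, where `P` interpolates the indicator of `t ^ m` on
the powers `t ^ w`, `-m ≤ w ≤ m`, acts by zero on `ρ_n` for `n < m`, as `m` is not a weight there.
On `ρ_m`, `P(K)` is the projection to the line of `e_0`, so the element acts as a multiple of the
matrix unit `E_{ij}`, and the multiple is a product of quantum integers that do not vanish because
`t` is not a root of unity. A linear relation among matrix coefficients, evaluated at this element
with `m` the largest size occurring in the relation, therefore loses all terms but that of `ᵐc^i_j`.
-/

open Function Polynomial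

theorem linearIndependent_of_triangular_dual {ι κ R M : Type*} [LinearOrder κ] [Ring R]
    [NoZeroDivisors R] [AddCommGroup M] [Module R M] {v : ι → M} (f : ι → M →ₗ[R] R)
    (rank : ι → κ) (hdiag : ∀ i, f i (v i) ≠ 0)
    (hoff : ∀ i j, j ≠ i → rank j ≤ rank i → f i (v j) = 0) : LinearIndependent R v := by
  rw [linearIndependent_iff]
  intro l hl
  by_contra hne
  obtain ⟨i, hi, hmax⟩ := l.support.exists_max_image rank (Finsupp.support_nonempty_iff.2 hne)
  have hoff_mul : ∀ j ∈ l.support, j ≠ i → l j * f i (v j) = 0 := fun j hj hji => by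
    rw [hoff i j hji (hmax j hj), mul_zero]
  have hdiag_mul : l i * f i (v i) = 0 := calc
    l i * f i (v i) = ∑ j ∈ l.support, l j * f i (v j) :=
      (Finset.sum_eq_single_of_mem i hi hoff_mul).symm
    _ = f i (Finsupp.linearCombination R v l) := by
      simp [Finsupp.linearCombination_apply, Finsupp.sum]
    _ = 0 := by rw [hl, map_zero]
  exact mul_ne_zero (Finsupp.mem_support_iff.1 hi) (hdiag i) hdiag_mul

theorem aeval_matrix_diagonal {R A n : Type*} [CommSemiring R] [Semiring A] [Algebra R A]
    [Fintype n] [DecidableEq n] (d : n → A) (p : R[X]) :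
    aeval (Matrix.diagonal d) p = Matrix.diagonal fun i => aeval (d i) p := by
  rw [← aeval_pi_apply]
  exact aeval_algHom_apply (Matrix.diagonalAlgHom R) d p

theorem matrix_mul_single_one_mul_apply {R l m n o : Type*} [Semiring R] [Fintype m] [Fintype n]
    [DecidableEq m] [DecidableEq n] (A : Matrix l m R) (B : Matrix n o R) (p : m) (q : n)
    (i : l) (j : o) : (A * Matrix.single p q (1 : R) * B) i j = A i p * B q j := by
  rw [Matrix.mul_apply, Finset.sum_eq_single q _ (by simp), Matrix.mul_single_apply_same, mul_one]
  intro k _ hk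
  rw [Matrix.mul_single_apply_of_ne (hbj := hk), zero_mul]

/-- The weighted shift `e_j ↦ w j • e_{j+1}` on `Rⁿ` (with `e_n = 0`), as a matrix. It is the common
form of `Y` and of the transpose of `X` in the representations `ρ_m`. -/
def weightedShift {R : Type*} [Zero R] (n : ℕ) (w : ℕ → R) : Matrix (Fin n) (Fin n) R :=
  Matrix.of fun i j => if (i : ℕ) = (j : ℕ) + 1 then w j else 0

theorem weightedShift_pow_apply {R : Type*} [CommSemiring R] {n : ℕ} (w : ℕ → R) (k : ℕ)
    (i j : Fin n) :
    (weightedShift n w ^ k) i j =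
      if (i : ℕ) = j + k then ∏ l ∈ Finset.range k, w (j + l) else 0 := by
  induction k generalizing i with
  | zero => simp [Matrix.one_apply, Fin.ext_iff]
  | succ k ih =>
    simp only [pow_succ', Matrix.mul_apply, ih]
    by_cases hij : (i : ℕ) = j + (k + 1)
    · rw [Finset.sum_eq_single (⟨j + k, by omega⟩ : Fin n) _ (by simp), if_pos hij,
        Finset.prod_range_succ]
      · simp [weightedShift, hij, add_assoc, mul_comm]
      · intro l _ hl
        rw [if_neg fun h => hl (Fin.ext h), mul_zero]
    · rw [if_neg hij]
      refine Finset.sum_eq_zero fun l _ => ?_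
      by_cases hl : (l : ℕ) = j + k
      · simp [weightedShift, show (i : ℕ) ≠ l + 1 by omega]
      · rw [if_neg hl, mul_zero]

theorem zpow_injective_of_not_isOfFinOrder {G₀ : Type*} [GroupWithZero G₀] {t : G₀} (ht : t ≠ 0)
    (hfin : ¬IsOfFinOrder t) : Injective fun k : ℤ => t ^ k := by
  rw [← Units.val_mk0 ht, Units.isOfFinOrder_val] at hfin
  intro a b hab
  exact injective_zpow_iff_not_isOfFinOrder.2 hfin (Units.ext (by simpa using hab))

theorem qint_ne_zero {t : ℂ} (ht : Injective fun k : ℤ => t ^ k) {n : ℤ} (hn : n ≠ 0) :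
    qint t n ≠ 0 := by
  have hsub {k : ℤ} (hk : k ≠ 0) : t ^ k - t ^ (-k) ≠ 0 :=
    sub_ne_zero.2 (ht.ne (by omega))
  have hden : t ^ 2 - t⁻¹ ^ 2 = t ^ (2 : ℤ) - t ^ (-2 : ℤ) := by
    rw [zpow_neg, inv_pow]
    norm_cast
  rw [qint, hden]
  exact div_ne_zero (hsub (by omega)) (hsub two_ne_zero)

theorem Ymat_pow_apply_zero (t : ℂ) (m k : ℕ) (i : Fin (m + 1)) :
    (Ymat t m ^ k) i 0 = if (i : ℕ) = k then ∏ l ∈ Finset.range k, qint t (m - l) else 0 := by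
  have hY : Ymat t m = weightedShift (m + 1) fun l => qint t (m - l) := rfl
  simp [hY, weightedShift_pow_apply]

theorem Xmat_pow_zero_apply (t : ℂ) (m k : ℕ) (j : Fin (m + 1)) :
    (Xmat t m ^ k) 0 j = if (j : ℕ) = k then ∏ l ∈ Finset.range k, qint t (l + 1) else 0 := by
  have hX : Xmat t m = (weightedShift (m + 1) fun l => qint t (l + 1)).transpose := by
    ext i j
    by_cases h : (j : ℕ) = i + 1 <;> simp [Xmat, weightedShift, h]
  simp [hX, ← Matrix.transpose_pow, weightedShift_pow_apply]

/-- The interpolation polynomial with value `1` at `t ^ m` and `0` at `t ^ w` for all other integers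
`w ∈ [-m, m]`. Its value at `K` acts on `ρ_m` as the projection to the highest weight line. -/
def highestWeightPolynomial (t : ℂ) (m : ℕ) : ℂ[X] :=
  Lagrange.basis (Finset.Icc (-(m : ℤ)) m) (fun w => t ^ w) m

theorem eval_highestWeightPolynomial_self {t : ℂ} (ht : Injective fun k : ℤ => t ^ k) (m : ℕ) :
    (highestWeightPolynomial t m).eval (t ^ (m : ℤ)) = 1 :=
  Lagrange.eval_basis_self ht.injOn (Finset.mem_Icc.2 ⟨by omega, le_rfl⟩)

theorem eval_highestWeightPolynomial_of_lt (t : ℂ) {m : ℕ} {w : ℤ} (hmw : -(m : ℤ) ≤ w)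
    (hwm : w < m) : (highestWeightPolynomial t m).eval (t ^ w) = 0 :=
  Lagrange.eval_basis_of_ne (v := fun w : ℤ => t ^ w) hwm.ne' (Finset.mem_Icc.2 ⟨hmw, hwm.le⟩)

theorem aeval_Kmat_highestWeightPolynomial_of_lt (t : ℂ) {n m : ℕ} (hnm : n < m) :
    aeval (Kmat t n) (highestWeightPolynomial t m) = 0 := by
  rw [Kmat, aeval_matrix_diagonal, Matrix.diagonal_eq_zero]
  funext k
  exact eval_highestWeightPolynomial_of_lt t (by omega) (by omega)

theorem aeval_Kmat_highestWeightPolynomial_self {t : ℂ} (ht : Injective fun k : ℤ => t ^ k)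
    (m : ℕ) : aeval (Kmat t m) (highestWeightPolynomial t m) = Matrix.single 0 0 1 := by
  rw [Kmat, aeval_matrix_diagonal, ← Matrix.diagonal_single]
  congr 1
  funext k
  rw [coe_aeval_eq_eval]
  rcases eq_or_ne k 0 with rfl | hk
  · simpa using eval_highestWeightPolynomial_self ht m
  · have hpos : 0 < (k : ℕ) := Fin.pos_iff_ne_zero.2 hk
    rw [Pi.single_eq_of_ne hk, eval_highestWeightPolynomial_of_lt t (by omega) (by omega)]

/-- The element `Y ^ i * P(K) * X ^ j` of `Aₜ`, with `P` the highest weight polynomial of `ρ_m`. It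
lifts a multiple of the matrix unit `E_{ij}` of `ρ_m` to `Aₜ`. -/
def matrixUnitLift (t : ℂ) (m i j : ℕ) : At t :=
  aY t ^ i * aeval (aK t) (highestWeightPolynomial t m) * aX t ^ j

/-- The multiple of the matrix unit `E_{ij}` by which `matrixUnitLift t m i j` acts on `ρ_m`. -/
def matrixUnitLiftCoeff (t : ℂ) (m i j : ℕ) : ℂ :=
  (∏ l ∈ Finset.range i, qint t (m - l)) * ∏ l ∈ Finset.range j, qint t (l + 1)

theorem matrixUnitLiftCoeff_ne_zero {t : ℂ} (ht : Injective fun k : ℤ => t ^ k) {m i : ℕ}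
    (him : i ≤ m) (j : ℕ) : matrixUnitLiftCoeff t m i j ≠ 0 := by
  refine mul_ne_zero (Finset.prod_ne_zero_iff.2 fun l hl => qint_ne_zero ht ?_)
    (Finset.prod_ne_zero_iff.2 fun l _ => qint_ne_zero ht (by omega))
  have hli : l < i := Finset.mem_range.1 hl
  omega

namespace IsRho

variable {t : ℂ} {n : ℕ} {ρ : At t →ₐ[ℂ] Matrix (Fin (n + 1)) (Fin (n + 1)) ℂ}

theorem map_matrixUnitLift (hρ : IsRho t n ρ) (m i j : ℕ) :
    ρ (matrixUnitLift t m i j) =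
      Ymat t n ^ i * aeval (Kmat t n) (highestWeightPolynomial t m) * Xmat t n ^ j := by
  obtain ⟨hX, hY, hK, -⟩ := hρ
  rw [matrixUnitLift, map_mul, map_mul, map_pow, map_pow, ← aeval_algHom_apply, hX, hY, hK]

theorem map_matrixUnitLift_of_lt (hρ : IsRho t n ρ) {m : ℕ} (hnm : n < m) (i j : ℕ) :
    ρ (matrixUnitLift t m i j) = 0 := by
  rw [hρ.map_matrixUnitLift, aeval_Kmat_highestWeightPolynomial_of_lt t hnm, mul_zero, zero_mul]

theorem map_matrixUnitLift_self (hρ : IsRho t n ρ) (ht : Injective fun k : ℤ => t ^ k)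
    (i j : Fin (n + 1)) :
    ρ (matrixUnitLift t n i j) = Matrix.single i j (matrixUnitLiftCoeff t n i j) := by
  ext a b
  rw [hρ.map_matrixUnitLift, aeval_Kmat_highestWeightPolynomial_self ht,
    matrix_mul_single_one_mul_apply, Ymat_pow_apply_zero, Xmat_pow_zero_apply,
    Matrix.single_apply, ite_zero_mul_ite_zero]
  simp only [Fin.val_inj, eq_comm, matrixUnitLiftCoeff]

end IsRho

/-- The matrix coefficient functionals `ᵐc^i_j`, over all `m ≥ 0` and
`0 ≤ i, j ≤ m`, are linearly independent in the dual space of `Aₜ`. -/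
theorem stmt5 (t : ℂ) (ht : t ≠ 0) (hroot : ∀ k : ℕ, 0 < k → t ^ k ≠ 1)
    (ρ : ∀ m : ℕ, At t →ₐ[ℂ] Matrix (Fin (m + 1)) (Fin (m + 1)) ℂ)
    (hρ : ∀ m, IsRho t m (ρ m)) :
    LinearIndependent ℂ (coeffFn t ρ) := by
  have hinj : Injective fun k : ℤ => t ^ k := by
    refine zpow_injective_of_not_isOfFinOrder ht fun hfin => ?_
    obtain ⟨k, hk, htk⟩ := isOfFinOrder_iff_pow_eq_one.1 hfin
    exact hroot k hk htk
  refine linearIndependent_of_triangular_dual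
    (fun p => Module.Dual.eval ℂ (At t) (matrixUnitLift t p.1 p.2.1 p.2.2)) Sigma.fst ?_ ?_
  · rintro ⟨m, i, j⟩
    change ρ m (matrixUnitLift t m i j) i j ≠ 0
    rw [(hρ m).map_matrixUnitLift_self hinj, Matrix.single_apply_same]
    exact matrixUnitLiftCoeff_ne_zero hinj i.is_le j
  · rintro ⟨m, i, j⟩ ⟨n, a, b⟩ hne (hnm : n ≤ m)
    change ρ n (matrixUnitLift t m i j) a b = 0
    rcases hnm.lt_or_eq with hlt | rfl
    · rw [(hρ n).map_matrixUnitLift_of_lt hlt, Matrix.zero_apply]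
    · rw [(hρ n).map_matrixUnitLift_self hinj, Matrix.single_apply_of_ne]
      rintro ⟨rfl, rfl⟩
      exact hne rfl

end
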